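/- If p_v is the multivariate Rademacher distribution (uniform on {±1}^D), then under the assumptions below, Var_{p_d, p_v}[∇_θ f(θ*; x, v_1^M)] = Σ_{i,j} V_{ij} + (2/M) Σ_{i≠j} W_{ij}. (Lemma B.6 of the paper, Rademacher case.) -/

import Mathlib

open MeasureTheory

noncomputable section

/-- `∂ᵢ log p_m(x;θ)`, the `i`-th partial derivative in `x` of the log-density. -/
def dLx {D K : ℕ} (pm : EuclideanSpace ℝ (Fin K) → (Fin D → ℝ) → ℝ)
    (θ : EuclideanSpace ℝ (Fin K)) (x : Fin D → ℝ) (i : Fin D) : ℝ :=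
  fderiv ℝ (fun y => Real.log (pm θ y)) x (Pi.single i 1)

/-- `∂ᵢ∂ⱼ log p_m(x;θ)`, a second partial derivative in `x` of the log-density. -/
def d2Lx {D K : ℕ} (pm : EuclideanSpace ℝ (Fin K) → (Fin D → ℝ) → ℝ)
    (θ : EuclideanSpace ℝ (Fin K)) (x : Fin D → ℝ) (i j : Fin D) : ℝ :=
  fderiv ℝ (fun y => dLx pm θ y j) x (Pi.single i 1)

/-- `u_{ij}(x) = ∇_θ ∂ᵢ∂ⱼ l_m + ½ ∇_θ(∂ᵢ l_m ∂ⱼ l_m)` evaluated at `θ = θ*`. -/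
def uVec {D K : ℕ} (pm : EuclideanSpace ℝ (Fin K) → (Fin D → ℝ) → ℝ)
    (θstar : EuclideanSpace ℝ (Fin K)) (i j : Fin D) (x : Fin D → ℝ) :
    EuclideanSpace ℝ (Fin K) :=
  gradient (fun θ => d2Lx pm θ x i j) θstar
    + (1/2 : ℝ) • gradient (fun θ => dLx pm θ x i * dLx pm θ x j) θstar

/-- `f(θ; x, v_1^M) = (1/M) Σⱼ [vⱼᵀ ∇ₓ s_m(x;θ) vⱼ + ½ (vⱼᵀ s_m(x;θ))²]`. -/
def avgF {D K M : ℕ} (pm : EuclideanSpace ℝ (Fin K) → (Fin D → ℝ) → ℝ)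
    (θ : EuclideanSpace ℝ (Fin K)) (x : Fin D → ℝ) (vs : Fin M → Fin D → ℝ) : ℝ :=
  (1 / (M : ℝ)) * ∑ k : Fin M,
    ((∑ i, ∑ j, vs k i * vs k j * d2Lx pm θ x i j)
      + (1/2) * (∑ i, vs k i * dLx pm θ x i) ^ 2)

/-- `∇_θ f(θ*; x, v_1^M)`. -/
def gradF {D K M : ℕ} (pm : EuclideanSpace ℝ (Fin K) → (Fin D → ℝ) → ℝ)
    (θstar : EuclideanSpace ℝ (Fin K)) (x : Fin D → ℝ) (vs : Fin M → Fin D → ℝ) :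
    EuclideanSpace ℝ (Fin K) :=
  gradient (fun θ => avgF pm θ x vs) θstar

/-!
For fixed `x`, each coordinate of `∇_θ f(θ*; x, v)` is a quadratic form `vᵀ U v` in the sign
vector `v`, with `U` symmetric. As `vᵢ² = 1`, the diagonal contributes the constant `tr U`, and the
monomials `vᵢ vⱼ` with `i < j` are orthonormal, so
`E[vᵀ A v] = tr A` and `Cov(vᵀ A v, vᵀ B v) = 2 ∑_{i ≠ j} Aᵢⱼ Bᵢⱼ`.
Averaging `M` independent copies keeps the mean and divides the covariance by `M`; integrating the
resulting conditional second moment over `x` gives the formula.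
-/

open ProbabilityTheory Matrix
open scoped BigOperators

section SampleMean

variable {Ω κ : Type*} [MeasurableSpace Ω] [Fintype κ] {μ : Measure Ω} [IsProbabilityMeasure μ]
  {f g : Ω → ℝ}

lemma memLp_pi_eval {p : ENNReal} (hf : MemLp f p μ) (k : κ) :
    MemLp (fun ω : κ → Ω => f (ω k)) p (Measure.pi fun _ => μ) :=
  hf.comp_measurePreserving (measurePreserving_eval (fun _ => μ) k)

lemma covariance_pi_eval [DecidableEq κ] (hf : MemLp f 2 μ) (hg : MemLp g 2 μ) (k l : κ) :
    cov[fun ω : κ → Ω => f (ω k), fun ω => g (ω l); Measure.pi fun _ => μ] =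
      if k = l then cov[f, g; μ] else 0 := by
  have heval (k : κ) : (Measure.pi fun _ : κ => μ).map (Function.eval k) = μ :=
    (measurePreserving_eval (fun _ => μ) k).map_eq
  have heval_meas (k : κ) : AEMeasurable (Function.eval k) (Measure.pi fun _ : κ => μ) :=
    (measurable_pi_apply k).aemeasurable
  split_ifs with hkl
  · subst hkl
    conv_rhs => rw [← heval k]
    rw [covariance_map ((heval k).symm ▸ hf.1) ((heval k).symm ▸ hg.1) (heval_meas k)]
    rfl
  · have hindep : IndepFun (f ∘ Function.eval k) (g ∘ Function.eval l)
        (Measure.pi fun _ : κ => μ) :=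
      ((iIndepFun_pi (X := fun _ => id) fun _ => aemeasurable_id).indepFun hkl).comp₀
        (heval_meas k) (heval_meas l) ((heval k).symm ▸ hf.1.aemeasurable)
        ((heval l).symm ▸ hg.1.aemeasurable)
    exact hindep.covariance_eq_zero (memLp_pi_eval hf k) (memLp_pi_eval hg l)

lemma integral_pi_sampleMean [Nonempty κ] (hf : Integrable f μ) :
    ∫ ω : κ → Ω, (Fintype.card κ : ℝ)⁻¹ * ∑ k, f (ω k) ∂(Measure.pi fun _ => μ) =
      ∫ x, f x ∂μ := by
  have heval (k : κ) : ∫ ω : κ → Ω, f (ω k) ∂(Measure.pi fun _ => μ) = ∫ x, f x ∂μ :=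
    integral_comp_eval (μ := fun _ => μ) hf.1
  rw [integral_const_mul, integral_finsetSum _ fun k _ => integrable_comp_eval hf]
  simp [heval]

lemma covariance_pi_sampleMean (hf : MemLp f 2 μ) (hg : MemLp g 2 μ) :
    cov[fun ω : κ → Ω => (Fintype.card κ : ℝ)⁻¹ * ∑ k, f (ω k),
        fun ω => (Fintype.card κ : ℝ)⁻¹ * ∑ k, g (ω k); Measure.pi fun _ => μ] =
      (Fintype.card κ : ℝ)⁻¹ * cov[f, g; μ] := by
  classical
  rw [covariance_const_mul_left, covariance_const_mul_right,
    covariance_fun_sum_fun_sum (fun k => memLp_pi_eval hf k) (fun k => memLp_pi_eval hg k)]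
  rcases eq_or_ne (Fintype.card κ : ℝ) 0 with h | h
  · simp [h]
  · simp [covariance_pi_eval hf hg, h]

lemma integral_pi_sampleMean_mul_sampleMean [Nonempty κ] (hf : MemLp f 2 μ) (hg : MemLp g 2 μ) :
    ∫ ω : κ → Ω, ((Fintype.card κ : ℝ)⁻¹ * ∑ k, f (ω k)) *
        ((Fintype.card κ : ℝ)⁻¹ * ∑ k, g (ω k)) ∂(Measure.pi fun _ => μ) =
      (∫ x, f x ∂μ) * (∫ x, g x ∂μ) + (Fintype.card κ : ℝ)⁻¹ * cov[f, g; μ] := by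
  have hmemLp {h : Ω → ℝ} (hh : MemLp h 2 μ) :
      MemLp (fun ω : κ → Ω => (Fintype.card κ : ℝ)⁻¹ * ∑ k, h (ω k)) 2 (Measure.pi fun _ => μ) :=
    (memLp_finsetSum _ fun k _ => memLp_pi_eval hh k).const_mul _
  rw [← covariance_pi_sampleMean hf hg, covariance_eq_sub (hmemLp hf) (hmemLp hg),
    integral_pi_sampleMean (hf.integrable one_le_two),
    integral_pi_sampleMean (hg.integrable one_le_two), add_sub_cancel]
  rfl

end SampleMean

lemma dotProduct_mulVec_self_eq_sum {ι R : Type*} [Fintype ι] [CommSemiring R]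
    (A : Matrix ι ι R) (v : ι → R) :
    v ⬝ᵥ A *ᵥ v = ∑ i, ∑ j, v i * v j * A i j := by
  simp only [dotProduct, mulVec, Finset.mul_sum]
  exact Finset.sum_congr rfl fun i _ => Finset.sum_congr rfl fun j _ => by ring

lemma measurable_quadForm {ι : Type*} [Fintype ι] (A : Matrix ι ι ℝ) :
    Measurable fun v => v ⬝ᵥ A *ᵥ v := by
  simp only [dotProduct_mulVec_self_eq_sum]
  fun_prop

section SignVector

variable {ι : Type*}

/-- The vector in `{±1}^ι` encoded by `s`, with `true` standing for `1` and `false` for `-1`. -/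
def signVec (s : ι → Bool) : ι → ℝ := fun i => if s i then (1 : ℝ) else -1

lemma signVec_mul_self (s : ι → Bool) (i : ι) : signVec s i * signVec s i = 1 := by
  cases h : s i <;> simp [signVec, h]

variable [DecidableEq ι]

lemma signVec_update_not (s : ι → Bool) (t : ι) :
    signVec (Function.update s t (!s t)) = Function.update (signVec s) t (-signVec s t) := by
  ext i
  rcases eq_or_ne i t with rfl | hit
  · cases h : s i <;> simp [signVec, h]
  · simp [signVec, hit]

variable [Fintype ι]

lemma expect_signVec_eq_zero_of_odd {g : (ι → ℝ) → ℝ} (t : ι)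
    (hg : ∀ v, g (Function.update v t (-v t)) = -g v) :
    𝔼 s : ι → Bool, g (signVec s) = 0 := by
  have hflip : Function.Involutive fun s : ι → Bool => Function.update s t (!s t) := fun s => by
    simp
  have hneg : 𝔼 s : ι → Bool, g (signVec s) = 𝔼 s : ι → Bool, -g (signVec s) :=
    Fintype.expect_equiv hflip.toPerm _ _ fun s => by
      rw [hflip.coe_toPerm, signVec_update_not, hg, neg_neg]
  rw [Finset.expect_neg_distrib] at hneg
  linarith

lemma expect_signVec_mul (i j : ι) :
    𝔼 s : ι → Bool, signVec s i * signVec s j = if i = j then 1 else 0 := by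
  split_ifs with hij
  · subst hij
    simp [signVec_mul_self]
  · exact expect_signVec_eq_zero_of_odd (g := fun v => v i * v j) i fun v => by
      simp [Ne.symm hij]

lemma expect_signVec_mul_mul_mul {i j : ι} (hij : i ≠ j) (p q : ι) :
    𝔼 s : ι → Bool, signVec s i * signVec s j * (signVec s p * signVec s q) =
      (if i = p ∧ j = q then 1 else 0) + if i = q ∧ j = p then 1 else 0 := by
  by_cases hi : p ≠ i ∧ q ≠ i
  · rw [expect_signVec_eq_zero_of_odd (g := fun v => v i * v j * (v p * v q)) i fun v => by
      simp [hij.symm, hi.1, hi.2]]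
    simp [hi.1.symm, hi.2.symm]
  by_cases hj : p ≠ j ∧ q ≠ j
  · rw [expect_signVec_eq_zero_of_odd (g := fun v => v i * v j * (v p * v q)) j fun v => by
      simp [hij, hj.1, hj.2]]
    simp [hj.1.symm, hj.2.symm]
  have hone (s : ι → Bool) : signVec s i * signVec s j * (signVec s i * signVec s j) = 1 := by
    rw [mul_mul_mul_comm, signVec_mul_self, signVec_mul_self, one_mul]
  obtain ⟨rfl, rfl⟩ | ⟨rfl, rfl⟩ : p = i ∧ q = j ∨ p = j ∧ q = i := by grind
  · simp [hone, hij]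
  · simp [hone, mul_comm (signVec _ p) (signVec _ q), hij]

lemma expect_signVec_quadForm (A : Matrix ι ι ℝ) :
    𝔼 s : ι → Bool, signVec s ⬝ᵥ A *ᵥ signVec s = A.trace := by
  simp only [dotProduct_mulVec_self_eq_sum, Finset.expect_sum_comm, ← Finset.expect_mul,
    expect_signVec_mul]
  simp [trace]

lemma expect_signVec_mul_quadForm {A : Matrix ι ι ℝ} (hA : A.IsSymm) (i j : ι) :
    𝔼 s : ι → Bool, signVec s i * signVec s j * (signVec s ⬝ᵥ A *ᵥ signVec s) =
      if i = j then A.trace else 2 * A i j := by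
  split_ifs with hij
  · subst hij
    simp only [signVec_mul_self, one_mul, expect_signVec_quadForm]
  · simp only [dotProduct_mulVec_self_eq_sum, Finset.mul_sum, Finset.expect_sum_comm,
      ← mul_assoc _ _ (A _ _), ← Finset.expect_mul, expect_signVec_mul_mul_mul hij]
    simp [add_mul, Finset.sum_add_distrib, ite_and, hA.apply, two_mul]

lemma expect_signVec_quadForm_mul_quadForm (A : Matrix ι ι ℝ) {B : Matrix ι ι ℝ} (hB : B.IsSymm) :
    𝔼 s : ι → Bool, (signVec s ⬝ᵥ A *ᵥ signVec s) * (signVec s ⬝ᵥ B *ᵥ signVec s) =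
      A.trace * B.trace + 2 * ∑ i, ∑ j, if i ≠ j then A i j * B i j else 0 := by
  calc
    _ = ∑ i, ∑ j, A i j *
          𝔼 s : ι → Bool, signVec s i * signVec s j * (signVec s ⬝ᵥ B *ᵥ signVec s) := by
      simp only [dotProduct_mulVec_self_eq_sum A, Finset.sum_mul, Finset.expect_sum_comm,
        Finset.mul_expect]
      exact Finset.sum_congr rfl fun i _ => Finset.sum_congr rfl fun j _ =>
        Finset.expect_congr rfl fun s _ => by ring
    _ = ∑ i, ∑ j, ((if i = j then A i j * B.trace else 0) +
          2 * if i ≠ j then A i j * B i j else 0) := by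
      refine Finset.sum_congr rfl fun i _ => Finset.sum_congr rfl fun j _ => ?_
      rw [expect_signVec_mul_quadForm hB]
      split_ifs <;> first | contradiction | ring
    _ = _ := by
      simp only [Finset.sum_add_distrib, ← Finset.mul_sum, Finset.sum_ite_eq, Finset.mem_univ,
        if_true, trace, diag_apply, Finset.sum_mul]

end SignVector

section Rademacher

variable {ι : Type*} [Fintype ι] [DecidableEq ι]

variable (ι) in
/-- The multivariate Rademacher distribution, uniform on `{±1}^ι`. -/
def rademacher : Measure (ι → ℝ) :=
  Measure.map signVec (PMF.uniformOfFintype (ι → Bool)).toMeasure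

instance : IsProbabilityMeasure (rademacher ι) :=
  Measure.isProbabilityMeasure_map (measurable_of_finite _).aemeasurable

lemma integral_rademacher {g : (ι → ℝ) → ℝ} (hg : Measurable g) :
    ∫ v, g v ∂(rademacher ι) = 𝔼 s : ι → Bool, g (signVec s) := by
  rw [rademacher, integral_map (measurable_of_finite _).aemeasurable hg.aestronglyMeasurable,
    PMF.integral_eq_sum, Fintype.expect_eq_sum_div_card, Finset.sum_div]
  simp [div_eq_inv_mul]

lemma memLp_rademacher {g : (ι → ℝ) → ℝ} (hg : Measurable g) (p : ENNReal) :
    MemLp g p (rademacher ι) := by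
  rw [rademacher, memLp_map_measure_iff hg.aestronglyMeasurable
    (measurable_of_finite _).aemeasurable]
  exact MemLp.of_discrete

lemma integral_rademacher_quadForm (A : Matrix ι ι ℝ) :
    ∫ v, v ⬝ᵥ A *ᵥ v ∂(rademacher ι) = A.trace := by
  rw [integral_rademacher (measurable_quadForm A), expect_signVec_quadForm]

lemma covariance_rademacher_quadForm (A : Matrix ι ι ℝ) {B : Matrix ι ι ℝ} (hB : B.IsSymm) :
    cov[fun v => v ⬝ᵥ A *ᵥ v, fun v => v ⬝ᵥ B *ᵥ v; rademacher ι] =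
      2 * ∑ i, ∑ j, if i ≠ j then A i j * B i j else 0 := by
  have hA_meas := measurable_quadForm A
  have hB_meas := measurable_quadForm B
  rw [covariance_eq_sub (memLp_rademacher hA_meas 2) (memLp_rademacher hB_meas 2),
    integral_rademacher_quadForm, integral_rademacher_quadForm,
    integral_rademacher (hA_meas.mul hB_meas), sub_eq_iff_eq_add']
  exact expect_signVec_quadForm_mul_quadForm A hB

end Rademacher

section Gradient

variable {E : Type*} [NormedAddCommGroup E] [InnerProductSpace ℝ E] [CompleteSpace E]
  {f g : E → ℝ} {f' g' x : E}

lemma hasGradientAt_fun_add (hf : HasGradientAt f f' x) (hg : HasGradientAt g g' x) :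
    HasGradientAt (fun y => f y + g y) (f' + g') x := by
  rw [hasGradientAt_iff_hasFDerivAt, map_add]
  exact hf.hasFDerivAt.add hg.hasFDerivAt

lemma hasGradientAt_const_mul (c : ℝ) (hf : HasGradientAt f f' x) :
    HasGradientAt (fun y => c * f y) (c • f') x := by
  rw [hasGradientAt_iff_hasFDerivAt, map_smul]
  exact hf.hasFDerivAt.const_mul c

lemma hasGradientAt_fun_sum {ι : Type*} {s : Finset ι} {F : ι → E → ℝ} {F' : ι → E}
    (hF : ∀ i ∈ s, HasGradientAt (F i) (F' i) x) :
    HasGradientAt (fun y => ∑ i ∈ s, F i y) (∑ i ∈ s, F' i) x := by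
  rw [hasGradientAt_iff_hasFDerivAt, map_sum]
  exact HasFDerivAt.fun_sum fun i hi => (hF i hi).hasFDerivAt

end Gradient

section PartialDerivatives

variable {E F V : Type*} [NormedAddCommGroup E] [NormedSpace ℝ E]
  [NormedAddCommGroup F] [NormedSpace ℝ F] [NormedAddCommGroup V] [NormedSpace ℝ V]

lemma contDiff_fderiv_snd_apply {m n : WithTop ℕ∞} {G : E → F → V}
    (hG : ContDiff ℝ n fun p : E × F => G p.1 p.2) (hmn : m + 1 ≤ n) (w : F) :
    ContDiff ℝ m fun p : E × F => fderiv ℝ (G p.1) p.2 w :=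
  (ContDiff.fderiv (f := fun p : E × F => G p.1)
    (hG.comp ((contDiff_fst.comp contDiff_fst).prodMk contDiff_snd)) contDiff_snd hmn).clm_apply
    contDiff_const

lemma fderiv_fderiv_apply_comm {L : F → V} {x : F} (hL : ContDiffAt ℝ 2 L x) (v w : F) :
    fderiv ℝ (fun y => fderiv ℝ L y w) x v = fderiv ℝ (fun y => fderiv ℝ L y v) x w := by
  have hdiff : DifferentiableAt ℝ (fderiv ℝ L) x :=
    (hL.fderiv_right (m := 1) (by norm_num)).differentiableAt one_ne_zero
  have happly (v w : F) :
      fderiv ℝ (fun y => fderiv ℝ L y w) x v = fderiv ℝ (fderiv ℝ L) x v w := by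
    simp [fderiv_clm_apply hdiff (differentiableAt_const w)]
  rw [happly, happly]
  exact (hL.isSymmSndFDerivAt (by simp)).eq v w

end PartialDerivatives

section SlicedGradient

variable {D K M : ℕ} {pm : EuclideanSpace ℝ (Fin K) → (Fin D → ℝ) → ℝ}

lemma contDiff_dLx {m n : WithTop ℕ∞}
    (hlog : ContDiff ℝ n fun p : EuclideanSpace ℝ (Fin K) × (Fin D → ℝ) => Real.log (pm p.1 p.2))
    (hmn : m + 1 ≤ n) (i : Fin D) :
    ContDiff ℝ m fun p : EuclideanSpace ℝ (Fin K) × (Fin D → ℝ) => dLx pm p.1 p.2 i :=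
  contDiff_fderiv_snd_apply (G := fun θ y => Real.log (pm θ y)) hlog hmn (Pi.single i 1)

lemma contDiff_d2Lx {m n : WithTop ℕ∞}
    (hlog : ContDiff ℝ n fun p : EuclideanSpace ℝ (Fin K) × (Fin D → ℝ) => Real.log (pm p.1 p.2))
    (hmn : m + 1 + 1 ≤ n) (i j : Fin D) :
    ContDiff ℝ m fun p : EuclideanSpace ℝ (Fin K) × (Fin D → ℝ) => d2Lx pm p.1 p.2 i j :=
  contDiff_fderiv_snd_apply (G := fun θ y => dLx pm θ y j) (contDiff_dLx hlog hmn j) le_rfl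
    (Pi.single i 1)

lemma d2Lx_comm {θ : EuclideanSpace ℝ (Fin K)} {x : Fin D → ℝ}
    (hlog : ContDiffAt ℝ 2 (fun y => Real.log (pm θ y)) x) (i j : Fin D) :
    d2Lx pm θ x i j = d2Lx pm θ x j i :=
  fderiv_fderiv_apply_comm hlog _ _

lemma avgF_eq_sum (θ : EuclideanSpace ℝ (Fin K)) (x : Fin D → ℝ) (vs : Fin M → Fin D → ℝ) :
    avgF pm θ x vs = (M : ℝ)⁻¹ * ∑ k, ∑ i, ∑ j,
      vs k i * vs k j * (d2Lx pm θ x i j + 1 / 2 * (dLx pm θ x i * dLx pm θ x j)) := by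
  simp only [avgF, one_div, sq, Finset.sum_mul_sum]
  simp only [Finset.mul_sum, ← Finset.sum_add_distrib]
  refine Finset.sum_congr rfl fun k _ => Finset.sum_congr rfl fun i _ =>
    Finset.sum_congr rfl fun j _ => ?_
  ring

/-- For fixed `x`, the matrix of the `a`-th coordinates of the vectors `u_{ij}(x)`; its quadratic
form at `v` is the `a`-th coordinate of `∇_θ f(θ; x, v)`. -/
def uMatrix (pm : EuclideanSpace ℝ (Fin K) → (Fin D → ℝ) → ℝ) (θ : EuclideanSpace ℝ (Fin K))
    (a : Fin K) (x : Fin D → ℝ) : Matrix (Fin D) (Fin D) ℝ :=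
  Matrix.of fun i j => uVec pm θ i j x a

lemma isSymm_uMatrix {x : Fin D → ℝ}
    (hlog : ∀ θ, ContDiffAt ℝ 2 (fun y => Real.log (pm θ y)) x)
    (θ : EuclideanSpace ℝ (Fin K)) (a : Fin K) :
    (uMatrix pm θ a x).IsSymm := by
  refine IsSymm.ext fun i j => ?_
  simp only [uMatrix, of_apply, uVec, d2Lx_comm (hlog _) j i,
    mul_comm (dLx pm _ x j) (dLx pm _ x i)]

lemma hasGradientAt_uVec
    (hlog : ContDiff ℝ 3 fun p : EuclideanSpace ℝ (Fin K) × (Fin D → ℝ) => Real.log (pm p.1 p.2))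
    (θ : EuclideanSpace ℝ (Fin K)) (x : Fin D → ℝ) (i j : Fin D) :
    HasGradientAt (fun θ => d2Lx pm θ x i j + 1 / 2 * (dLx pm θ x i * dLx pm θ x j))
      (uVec pm θ i j x) θ := by
  have hpair : ContDiff ℝ 1 fun θ : EuclideanSpace ℝ (Fin K) => (θ, x) :=
    contDiff_id.prodMk contDiff_const
  have hdLx (i : Fin D) : ContDiff ℝ 1 fun θ => dLx pm θ x i :=
    (contDiff_dLx hlog (by norm_num) i).comp hpair
  have hd2Lx : ContDiff ℝ 1 fun θ => d2Lx pm θ x i j :=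
    (contDiff_d2Lx hlog (by norm_num) i j).comp hpair
  exact hasGradientAt_fun_add (hd2Lx.differentiable one_ne_zero θ).hasGradientAt
    (hasGradientAt_const_mul _
      (((hdLx i).mul (hdLx j)).differentiable one_ne_zero θ).hasGradientAt)

lemma gradF_apply_eq_sampleMean
    (hlog : ContDiff ℝ 3 fun p : EuclideanSpace ℝ (Fin K) × (Fin D → ℝ) => Real.log (pm p.1 p.2))
    (θ : EuclideanSpace ℝ (Fin K)) (x : Fin D → ℝ)
    (vs : Fin M → Fin D → ℝ) (a : Fin K) :
    gradF pm θ x vs a = (M : ℝ)⁻¹ * ∑ k, vs k ⬝ᵥ uMatrix pm θ a x *ᵥ vs k := by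
  have hgrad : HasGradientAt (fun θ => avgF pm θ x vs)
      ((M : ℝ)⁻¹ • ∑ k, ∑ i, ∑ j, (vs k i * vs k j) • uVec pm θ i j x) θ := by
    simp only [avgF_eq_sum]
    exact hasGradientAt_const_mul _ <| hasGradientAt_fun_sum fun k _ =>
      hasGradientAt_fun_sum fun i _ => hasGradientAt_fun_sum fun j _ =>
        hasGradientAt_const_mul _ (hasGradientAt_uVec hlog θ x i j)
  rw [gradF, hgrad.gradient]
  simp [dotProduct_mulVec_self_eq_sum, uMatrix]

lemma integral_rademacher_gradF_mul_gradF
    (hlog : ContDiff ℝ 3 fun p : EuclideanSpace ℝ (Fin K) × (Fin D → ℝ) => Real.log (pm p.1 p.2))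
    (hM : M ≠ 0) (θ : EuclideanSpace ℝ (Fin K))
    (x : Fin D → ℝ) (a b : Fin K) :
    ∫ vs : Fin M → Fin D → ℝ, gradF pm θ x vs a * gradF pm θ x vs b
        ∂(Measure.pi fun _ => rademacher (Fin D)) =
      (∑ i, ∑ j, uVec pm θ i i x a * uVec pm θ j j x b) +
        2 / (M : ℝ) * ∑ i, ∑ j, if i ≠ j then uVec pm θ i j x a * uVec pm θ i j x b else 0 := by
  have : NeZero M := ⟨hM⟩
  have hmemLp (c : Fin K) :
      MemLp (fun v => v ⬝ᵥ uMatrix pm θ c x *ᵥ v) 2 (rademacher (Fin D)) :=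
    memLp_rademacher (measurable_quadForm _) 2
  have hsymm : (uMatrix pm θ b x).IsSymm :=
    isSymm_uMatrix (fun θ => ((hlog.comp (contDiff_const.prodMk contDiff_id)).of_le
      (by norm_num)).contDiffAt) θ b
  have hmoment := integral_pi_sampleMean_mul_sampleMean (κ := Fin M) (hmemLp a) (hmemLp b)
  simp only [Fintype.card_fin, integral_rademacher_quadForm,
    covariance_rademacher_quadForm _ hsymm] at hmoment
  simp only [gradF_apply_eq_sampleMean hlog, hmoment]
  simp only [trace, Finset.sum_mul_sum, diag_apply, uMatrix, of_apply]
  ring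

end SlicedGradient

lemma integral_sum_sum {X ι κ : Type*} [MeasurableSpace X] {μ : Measure X} [Fintype ι] [Fintype κ]
    {f : ι → κ → X → ℝ} (hf : ∀ i j, Integrable (f i j) μ) :
    ∫ x, ∑ i, ∑ j, f i j x ∂μ = ∑ i, ∑ j, ∫ x, f i j x ∂μ := by
  rw [integral_finsetSum _ fun i _ => integrable_finsetSum _ fun j _ => hf i j]
  exact Finset.sum_congr rfl fun i _ => integral_finsetSum _ fun j _ => hf i j

/-- Stated for the uncentred second moment, which is the covariance once the gradient has mean
zero. -/
theorem variance_of_sliced_gradient_rademacher_general {D K M : ℕ} (hM : M ≠ 0)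
    {pm : EuclideanSpace ℝ (Fin K) → (Fin D → ℝ) → ℝ} (hpm_pos : ∀ θ x, 0 < pm θ x)
    (hpm : ContDiff ℝ 3 fun p : EuclideanSpace ℝ (Fin K) × (Fin D → ℝ) => pm p.1 p.2)
    (θstar : EuclideanSpace ℝ (Fin K)) {μd : Measure (Fin D → ℝ)} [SFinite μd] {a b : Fin K}
    (hgg : Integrable (fun z : (Fin D → ℝ) × (Fin M → Fin D → ℝ) =>
        gradF pm θstar z.1 z.2 a * gradF pm θstar z.1 z.2 b)
      (μd.prod (Measure.pi fun _ => rademacher (Fin D))))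
    (hV : ∀ i j, Integrable (fun x => uVec pm θstar i i x a * uVec pm θstar j j x b) μd)
    (hW : ∀ i j, Integrable (fun x => uVec pm θstar i j x a * uVec pm θstar i j x b) μd) :
    ∫ z : (Fin D → ℝ) × (Fin M → Fin D → ℝ), gradF pm θstar z.1 z.2 a * gradF pm θstar z.1 z.2 b
        ∂(μd.prod (Measure.pi fun _ => rademacher (Fin D))) =
      (∑ i, ∑ j, ∫ x, uVec pm θstar i i x a * uVec pm θstar j j x b ∂μd) +
        2 / (M : ℝ) * ∑ i, ∑ j, if i ≠ j then
          ∫ x, uVec pm θstar i j x a * uVec pm θstar i j x b ∂μd else 0 := by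
  have hlog : ContDiff ℝ 3
      fun p : EuclideanSpace ℝ (Fin K) × (Fin D → ℝ) => Real.log (pm p.1 p.2) :=
    hpm.log fun p => (hpm_pos p.1 p.2).ne'
  have hW_offDiag (i j : Fin D) : Integrable
      (fun x => if i ≠ j then uVec pm θstar i j x a * uVec pm θstar i j x b else 0) μd := by
    split_ifs
    exacts [hW i j, integrable_zero _ _ _]
  rw [integral_prod _ hgg]
  simp only [integral_rademacher_gradF_mul_gradF hlog hM]
  rw [integral_add (integrable_finsetSum _ fun i _ => integrable_finsetSum _ fun j _ => hV i j)
      ((integrable_finsetSum _ fun i _ =>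
        integrable_finsetSum _ fun j _ => hW_offDiag i j).const_mul _),
    integral_const_mul, integral_sum_sum hV, integral_sum_sum hW_offDiag]
  congr! 5 with i _ j _
  split_ifs <;> simp

/-- **Lemma B.6 of the paper (Rademacher case).** If `p_v` is the multivariate Rademacher
distribution (uniform on `{±1}^D`), the covariance of `∇_θ f(θ*; x, v_1^M)` equals
`Σ_{ij} V_{ij} + (2/M) Σ_{i≠j} W_{ij}`. -/
theorem variance_of_sliced_gradient_rademacher
    (D K M : ℕ) (hD : 1 ≤ D) (hM : 1 ≤ M)
    (pd : (Fin D → ℝ) → ℝ)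
    (pm : EuclideanSpace ℝ (Fin K) → (Fin D → ℝ) → ℝ)
    (θstar : EuclideanSpace ℝ (Fin K))
    (μd μv : Measure (Fin D → ℝ)) [IsProbabilityMeasure μd] [IsProbabilityMeasure μv]
    -- data density: positive, differentiable; μd is the data distribution
    (hpd_pos : ∀ x, 0 < pd x) (hpd_diff : Differentiable ℝ pd)
    (hμd : μd = volume.withDensity (fun x => ENNReal.ofReal (pd x)))
    -- p_v is the multivariate Rademacher distribution, uniform on {±1}^D
    (hμv : μv = Measure.map (fun s : Fin D → Bool => fun i => if s i then (1 : ℝ) else -1)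
      (PMF.uniformOfFintype (Fin D → Bool)).toMeasure)
    -- model densities: positive, with all relevant derivatives existing
    (hpm_pos : ∀ θ x, 0 < pm θ x)
    (hsmooth : ContDiff ℝ (⊤ : ℕ∞)
      (fun p : EuclideanSpace ℝ (Fin K) × (Fin D → ℝ) => Real.log (pm p.1 p.2)))
    -- well-specified: p_d = p_m(·; θ*)
    (hws : pd = pm θstar)
    -- all expectations below are finite
    (hg_int : ∀ a : Fin K,
      Integrable (fun z : (Fin D → ℝ) × (Fin M → Fin D → ℝ) => gradF pm θstar z.1 z.2 a)
        (μd.prod (Measure.pi fun _ : Fin M => μv)))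
    (hgg_int : ∀ a b : Fin K,
      Integrable (fun z : (Fin D → ℝ) × (Fin M → Fin D → ℝ) =>
          gradF pm θstar z.1 z.2 a * gradF pm θstar z.1 z.2 b)
        (μd.prod (Measure.pi fun _ : Fin M => μv)))
    (huu_int : ∀ (i j p q : Fin D) (a b : Fin K),
      Integrable (fun x => uVec pm θstar i j x a * uVec pm θstar p q x b) μd)
    -- the assumptions of Theorem 1 hold, so the gradient has zero mean at θ*
    (hmean : ∀ a : Fin K,
      ∫ z : (Fin D → ℝ) × (Fin M → Fin D → ℝ), gradF pm θstar z.1 z.2 a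
        ∂(μd.prod (Measure.pi fun _ : Fin M => μv)) = 0) :
    ∀ a b : Fin K,
      (∫ z : (Fin D → ℝ) × (Fin M → Fin D → ℝ),
          gradF pm θstar z.1 z.2 a * gradF pm θstar z.1 z.2 b
          ∂(μd.prod (Measure.pi fun _ : Fin M => μv)))
        - (∫ z : (Fin D → ℝ) × (Fin M → Fin D → ℝ), gradF pm θstar z.1 z.2 a
            ∂(μd.prod (Measure.pi fun _ : Fin M => μv)))
          * (∫ z : (Fin D → ℝ) × (Fin M → Fin D → ℝ), gradF pm θstar z.1 z.2 b
              ∂(μd.prod (Measure.pi fun _ : Fin M => μv)))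
      = (∑ i, ∑ j, ∫ x, uVec pm θstar i i x a * uVec pm θstar j j x b ∂μd)
        + (2 / (M : ℝ)) * (∑ i, ∑ j, if i ≠ j then
            ∫ x, uVec pm θstar i j x a * uVec pm θstar i j x b ∂μd else 0) := by
  intro a b
  subst hμv
  have hpm : ContDiff ℝ 3 fun p : EuclideanSpace ℝ (Fin K) × (Fin D → ℝ) => pm p.1 p.2 := by
    simpa only [Real.exp_log (hpm_pos _ _), Nat.cast_ofNat] using (contDiff_infty.mp hsmooth 3).exp
  rw [hmean a, zero_mul, sub_zero]
  exact variance_of_sliced_gradient_rademacher_general (Nat.one_le_iff_ne_zero.mp hM) hpm_pos hpm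
    θstar (hgg_int a b) (fun i j => huu_int i i j j a b) (fun i j => huu_int i j i j a b)
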